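/- Existence of optimal dual multipliers: if there exists a primal feasible selection x, then the dual problem (D) min{ φ(μ) : μ ∈ ℝ^I, μ ≥ 0 } has a global minimum; i.e., there exists μ* ≥ 0 with φ(μ*) ≤ φ(μ) for every μ ≥ 0. (The dual function φ, being a piecewise affine convex function that is bounded below on the nonnegative orthant by the primal feasible value, attains its infimum there.) -/

import Mathlib

/-!
Introducing a variable `τ r` for each dual term `φ_r` turns the dual problem into the linear program
of minimizing `∑ i, c i * μ i + ∑ r, τ r` subject to `0 ≤ μ` and
`v p ≤ τ (ρ p) + ∑ i, μ i * d p i` for every path `p`. By weak duality the objective is bounded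
below by the value of any fractional primal solution.

A linear functional `ℓ` that is bounded below on a nonempty polyhedron attains its minimum. From any
point one can move without increasing `ℓ` until the set of active constraints is maximal; at such a
point `ℓ` vanishes on the common kernel of the active constraints, so its value there depends only
on the active set, and there are finitely many active sets.
-/

section LinearProgram

variable {𝕜 E ι : Type*} [Field 𝕜] [LinearOrder 𝕜] [AddCommGroup E] [Module 𝕜 E]

/-- The polyhedron cut out by the linear inequalities `b i ≤ f i x`, the feasible region of a linear
program. -/
def polyhedron (f : ι → E →ₗ[𝕜] 𝕜) (b : ι → 𝕜) : Set E :=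
  {x | ∀ i, b i ≤ f i x}

/-- The constraints of `polyhedron f b` that are tight at `x`. -/
def activeSet (f : ι → E →ₗ[𝕜] 𝕜) (b : ι → 𝕜) (x : E) : Set ι :=
  {i | f i x = b i}

variable [IsStrictOrderedRing 𝕜] {f : ι → E →ₗ[𝕜] 𝕜} {b : ι → 𝕜} {ℓ : E →ₗ[𝕜] 𝕜} {x u : E}

lemma nonneg_of_bddBelow_image_polyhedron (hbdd : BddBelow (ℓ '' polyhedron f b))
    (hx : x ∈ polyhedron f b) (hu : ∀ i, 0 ≤ f i u) : 0 ≤ ℓ u := by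
  obtain ⟨m, hm⟩ := hbdd
  by_contra! hneg
  have hray : ∀ t : 𝕜, 0 ≤ t → m ≤ ℓ x + t * ℓ u := fun t ht => by
    have hmem : x + t • u ∈ polyhedron f b := fun i => by
      simpa using le_add_of_le_of_nonneg (hx i) (mul_nonneg ht (hu i))
    simpa using hm (Set.mem_image_of_mem ℓ hmem)
  have hgap : 0 ≤ ℓ x - m := by simpa using hray 0 le_rfl
  have hlow := hray ((m - 1 - ℓ x) / ℓ u) (div_nonneg_of_nonpos (by linarith) hneg.le)
  rw [div_mul_cancel₀ _ hneg.ne] at hlow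
  linarith

/-- The ratio test of the simplex method. -/
lemma exists_activeSet_ssubset_add_smul [Finite ι] (hx : x ∈ polyhedron f b)
    (hu : ∀ i ∈ activeSet f b x, f i u = 0) (hneg : ∃ j, f j u < 0) :
    ∃ t : 𝕜, 0 ≤ t ∧ x + t • u ∈ polyhedron f b ∧
      activeSet f b x ⊂ activeSet f b (x + t • u) := by
  obtain ⟨j, (hj : f j u < 0), hmin⟩ := Set.exists_min_image {i | f i u < 0}
    (fun i => (f i x - b i) / -f i u) (Set.toFinite _) hneg
  set t := (f j x - b j) / -f j u
  have ht : 0 ≤ t := div_nonneg (sub_nonneg.2 (hx j)) (neg_nonneg.2 hj.le)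
  have htight : f j (x + t • u) = b j := by
    have : t * -f j u = f j x - b j := div_mul_cancel₀ _ (neg_ne_zero.2 hj.ne)
    simp only [map_add, map_smul, smul_eq_mul]
    linarith
  refine ⟨t, ht, fun i => ?_, (Set.ssubset_iff_of_subset fun i hi => ?_).2
    ⟨j, htight, fun hjx => hj.ne (hu j hjx)⟩⟩
  · simp only [map_add, map_smul, smul_eq_mul]
    rcases lt_or_ge (f i u) 0 with hi | hi
    · have := (le_div_iff₀ (neg_pos.2 hi)).1 (hmin i hi)
      linarith
    · exact le_add_of_le_of_nonneg (hx i) (mul_nonneg ht hi)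
  · have : f i x = b i := hi
    simp [activeSet, hu i hi, this]

lemma exists_le_forall_activeSet_nonneg [Finite ι] (hbdd : BddBelow (ℓ '' polyhedron f b))
    (hx : x ∈ polyhedron f b) :
    ∃ y ∈ polyhedron f b, ℓ y ≤ ℓ x ∧ ∀ u, (∀ i ∈ activeSet f b y, f i u = 0) → 0 ≤ ℓ u := by
  obtain ⟨y, ⟨hy, hyx⟩, hmax⟩ := exists_maximalFor_of_wellFoundedGT
    (fun y => y ∈ polyhedron f b ∧ ℓ y ≤ ℓ x) (activeSet f b) ⟨x, hx, le_rfl⟩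
  refine ⟨y, hy, hyx, fun u hu => ?_⟩
  by_contra! hℓu
  have hneg : ∃ j, f j u < 0 := by
    by_contra! hnonneg
    exact hℓu.not_ge (nonneg_of_bddBelow_image_polyhedron hbdd hy hnonneg)
  obtain ⟨t, ht, hmem, hss⟩ := exists_activeSet_ssubset_add_smul hy hu hneg
  have hle : ℓ (y + t • u) ≤ ℓ x := by
    simpa using add_le_of_le_of_nonpos hyx (mul_nonpos_of_nonneg_of_nonpos ht hℓu.le)
  exact hss.not_subset (hmax ⟨hmem, hle⟩ hss.subset)

theorem exists_isMinOn_polyhedron [Finite ι] (hne : (polyhedron f b).Nonempty)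
    (hbdd : BddBelow (ℓ '' polyhedron f b)) :
    ∃ x ∈ polyhedron f b, IsMinOn ℓ (polyhedron f b) x := by
  let G := {y ∈ polyhedron f b | ∀ u, (∀ i ∈ activeSet f b y, f i u = 0) → 0 ≤ ℓ u}
  have hdescend : ∀ x ∈ polyhedron f b, ∃ y ∈ G, ℓ y ≤ ℓ x := fun x hx =>
    let ⟨y, hy, hyx, hu⟩ := exists_le_forall_activeSet_nonneg hbdd hx
    ⟨y, ⟨hy, hu⟩, hyx⟩
  have hle : ∀ y ∈ G, ∀ z, activeSet f b y = activeSet f b z → ℓ y ≤ ℓ z := by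
    intro y hy z hyz
    have hker : ∀ i ∈ activeSet f b y, f i (z - y) = 0 := fun i hi => by
      have hiz : i ∈ activeSet f b z := hyz ▸ hi
      rw [map_sub, show f i z = b i from hiz, show f i y = b i from hi, sub_self]
    simpa only [map_sub, sub_nonneg] using hy.2 (z - y) hker
  obtain ⟨T, hTG, hT⟩ := Set.exists_subset_bijOn G (activeSet f b)
  have hTne : T.Nonempty := by
    obtain ⟨x, hx⟩ := hne
    obtain ⟨y, hy, -⟩ := hdescend x hx
    exact (hT.surjOn (Set.mem_image_of_mem _ hy)).imp fun _ h => h.1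
  obtain ⟨z, hz, hmin⟩ := Set.exists_min_image T ℓ
    (Set.Finite.of_finite_image (Set.toFinite _) hT.injOn) hTne
  refine ⟨z, (hTG hz).1, isMinOn_iff.2 fun x hx => ?_⟩
  obtain ⟨y, hy, hyx⟩ := hdescend x hx
  obtain ⟨y', hy', hyy'⟩ := hT.surjOn (Set.mem_image_of_mem _ hy)
  exact (hmin y' hy').trans ((hle y' (hTG hy') y hyy').trans hyx)

end LinearProgram

section DualProblem

open Finset

variable {𝕜 I R P : Type*} [Field 𝕜] [Fintype I]

/-- The left-hand sides of the constraints `0 ≤ μ i` and `v p ≤ τ (ρ p) + ∑ i, μ i * d p i` of the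
linear program in `(μ, τ)` that is equivalent to the dual problem. -/
def dualConstraint (ρ : P → R) (d : P → I → 𝕜) : I ⊕ P → (I → 𝕜) × (R → 𝕜) →ₗ[𝕜] 𝕜 :=
  Sum.elim (fun i => LinearMap.proj i ∘ₗ LinearMap.fst 𝕜 _ _)
    fun p => (Fintype.linearCombination 𝕜 (d p)).coprod (LinearMap.proj (ρ p))

/-- The objective `∑ i, c i * μ i + ∑ r, τ r` of the linear program in `(μ, τ)` that is equivalent
to the dual problem. -/
def dualObjective [Fintype R] (c : I → 𝕜) : (I → 𝕜) × (R → 𝕜) →ₗ[𝕜] 𝕜 :=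
  (Fintype.linearCombination 𝕜 c).coprod (Fintype.linearCombination 𝕜 1)

lemma dualObjective_apply [Fintype R] (c μ : I → 𝕜) (τ : R → 𝕜) :
    dualObjective c (μ, τ) = ∑ i, c i * μ i + ∑ r, τ r := by
  simp [dualObjective, Fintype.linearCombination_apply, mul_comm]

variable [LinearOrder 𝕜] {ρ : P → R} {v : P → 𝕜} {d : P → I → 𝕜} {c μ : I → 𝕜} {τ : R → 𝕜}

lemma mem_polyhedron_dualConstraint :
    (μ, τ) ∈ polyhedron (dualConstraint ρ d) (Sum.elim 0 v) ↔
      (∀ i, 0 ≤ μ i) ∧ ∀ p, v p ≤ τ (ρ p) + ∑ i, μ i * d p i := by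
  simp [polyhedron, dualConstraint, Fintype.linearCombination_apply, add_comm]

variable [IsStrictOrderedRing 𝕜] [Fintype R] [Fintype P] [DecidableEq R]

lemma sum_utility_le_dualObjective {x : P → 𝕜} (hx : ∀ p, 0 ≤ x p)
    (hxone : ∀ r, ∑ p with ρ p = r, x p = 1) (hxcap : ∀ i, ∑ p, d p i * x p ≤ c i)
    (hμτ : (μ, τ) ∈ polyhedron (dualConstraint ρ d) (Sum.elim 0 v)) :
    ∑ p, v p * x p ≤ dualObjective c (μ, τ) := by
  obtain ⟨hμ, hτ⟩ := mem_polyhedron_dualConstraint.1 hμτ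
  have hassign : ∑ p, τ (ρ p) * x p = ∑ r, τ r := by
    rw [← sum_fiberwise univ ρ]
    refine sum_congr rfl fun r _ => ?_
    rw [← mul_one (τ r), ← hxone r, mul_sum]
    exact sum_congr rfl fun p hp => by rw [(mem_filter.1 hp).2]
  have hload : ∑ p, (∑ i, μ i * d p i) * x p = ∑ i, (∑ p, d p i * x p) * μ i := by
    simp only [sum_mul]
    rw [sum_comm]
    exact sum_congr rfl fun i _ => sum_congr rfl fun p _ => by ring
  calc ∑ p, v p * x p
      ≤ ∑ p, (τ (ρ p) + ∑ i, μ i * d p i) * x p :=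
        sum_le_sum fun p _ => mul_le_mul_of_nonneg_right (hτ p) (hx p)
    _ = ∑ i, (∑ p, d p i * x p) * μ i + ∑ r, τ r := by
        simp only [add_mul, sum_add_distrib, hassign, hload, add_comm]
    _ ≤ ∑ i, c i * μ i + ∑ r, τ r := by
        gcongr with i
        · exact hμ i
        · exact hxcap i
    _ = dualObjective c (μ, τ) := (dualObjective_apply c μ τ).symm

theorem dual_problem_has_minimizer_general (φr : R → (I → 𝕜) → 𝕜)
    (hφr : ∀ r μ, IsGreatest ((fun p => v p - ∑ i, μ i * d p i) '' {p | ρ p = r}) (φr r μ))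
    (x : P → 𝕜) (hx : ∀ p, 0 ≤ x p) (hxone : ∀ r, ∑ p with ρ p = r, x p = 1)
    (hxcap : ∀ i, ∑ p, d p i * x p ≤ c i) :
    ∃ μstar : I → 𝕜, (∀ i, 0 ≤ μstar i) ∧
      ∀ μ : I → 𝕜, (∀ i, 0 ≤ μ i) →
        ∑ i, c i * μstar i + ∑ r, φr r μstar ≤ ∑ i, c i * μ i + ∑ r, φr r μ := by
  have hmem : ∀ μ : I → 𝕜, (∀ i, 0 ≤ μ i) →
      (μ, (φr · μ)) ∈ polyhedron (dualConstraint ρ d) (Sum.elim 0 v) := fun μ hμ =>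
    mem_polyhedron_dualConstraint.2
      ⟨hμ, fun p => sub_le_iff_le_add.1 ((hφr (ρ p) μ).2 ⟨p, rfl, rfl⟩)⟩
  have hbdd : BddBelow (dualObjective c '' polyhedron (dualConstraint ρ d) (Sum.elim 0 v)) :=
    ⟨∑ p, v p * x p, Set.forall_mem_image.2 fun _ => sum_utility_le_dualObjective hx hxone hxcap⟩
  obtain ⟨⟨μs, τs⟩, hs, hmin⟩ := exists_isMinOn_polyhedron ⟨_, hmem 0 fun _ => le_rfl⟩ hbdd
  obtain ⟨hμs, hτs⟩ := mem_polyhedron_dualConstraint.1 hs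
  have hφτ : ∀ r, φr r μs ≤ τs r := fun r => by
    obtain ⟨p, rfl, hp⟩ := (hφr r μs).1
    exact hp ▸ sub_le_iff_le_add.2 (hτs p)
  refine ⟨μs, hμs, fun μ hμ => ?_⟩
  calc ∑ i, c i * μs i + ∑ r, φr r μs
      ≤ ∑ i, c i * μs i + ∑ r, τs r := by gcongr with r; exact hφτ r
    _ ≤ ∑ i, c i * μ i + ∑ r, φr r μ := by
        simpa only [dualObjective_apply] using isMinOn_iff.1 hmin _ (hmem μ hμ)

end DualProblem

/-- Existence of optimal dual multipliers: if there exists a primal feasible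
selection x, then the dual problem min{ φ(μ) : μ ≥ 0 } has a global minimum, i.e. there is
μ* ≥ 0 with φ(μ*) ≤ φ(μ) for every μ ≥ 0. -/
theorem dual_problem_has_minimizer
    {I R P : Type*} [Fintype I] [Fintype R] [Fintype P] [DecidableEq R]
    (ρ : P → R) (v : P → ℝ) (d : P → I → ℝ) (c : I → ℝ)
    (hρ : ∀ r, ∃ p, ρ p = r)
    (φr : R → (I → ℝ) → ℝ)
    (hφr : ∀ r μ, IsGreatest
      ((fun p => v p - ∑ i, μ i * d p i) '' {p | ρ p = r}) (φr r μ))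
    (x : P → ℝ)
    (hx01 : ∀ p, x p = 0 ∨ x p = 1)
    (hxone : ∀ r, ∑ p ∈ Finset.univ.filter (fun p => ρ p = r), x p = 1)
    (hxcap : ∀ i, ∑ p, d p i * x p ≤ c i) :
    ∃ μstar : I → ℝ, (∀ i, 0 ≤ μstar i) ∧
      ∀ μ : I → ℝ, (∀ i, 0 ≤ μ i) →
        ∑ i, c i * μstar i + ∑ r, φr r μstar ≤ ∑ i, c i * μ i + ∑ r, φr r μ := by
  exact dual_problem_has_minimizer_general φr hφr x
    (fun p => (hx01 p).elim Eq.ge fun h => h ▸ zero_le_one) hxone hxcap
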